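/- Let L>0, Γ_{2j} = [2jL,(2j+1)L] for j∈ℤ, and let u(ρ,z) = lim_{n→∞} ( Σ_{j=−n}^{n} U_{Γ_{2j}}(ρ,z) + log n ) be the renormalized soliton potential. Then u is periodic in z with period 2L: u(ρ, z+2L) = u(ρ,z) for all ρ>0 and z∈ℝ. -/

import Mathlib

open Filter Topology

/-- Interval potential of the segment `[a,b]` on the `z`-axis. -/
noncomputable def intervalPotential (a b ρ z : ℝ) : ℝ :=
  Real.log (Real.sqrt (ρ ^ 2 + (z - a) ^ 2) - (z - a)) -
    Real.log (Real.sqrt (ρ ^ 2 + (z - b) ^ 2) - (z - b))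

/-!
Translating a periodic array of rods by its period `T` shifts the index of the rods by one, so the
symmetric partial sums at `z + T` and at `z` differ only by the potentials of one rod at each end,
while the renormalizing sequence cancels. Since
`U_{[a,b]}(ρ,z) = arsinh ((z - b) / ρ) - arsinh ((z - a) / ρ)`, `arsinh` is odd, and
`arsinh x - log x` converges as `x → ∞`, the potential of a rod decays as `|z| → ∞`, so the two
boundary terms vanish in the limit.
-/

theorem sqrt_sq_add_sq_eq_mul {r : ℝ} (hr : 0 < r) (t : ℝ) :
    √(r ^ 2 + t ^ 2) = r * √(1 + (t / r) ^ 2) := by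
  have factor : r ^ 2 + t ^ 2 = r ^ 2 * (1 + (t / r) ^ 2) := by field_simp
  rw [factor, Real.sqrt_mul (sq_nonneg r), Real.sqrt_sq hr.le]

theorem log_sqrt_sq_add_sq_sub {ρ : ℝ} (hρ : 0 < ρ) (t : ℝ) :
    Real.log (√(ρ ^ 2 + t ^ 2) - t) = Real.log ρ - Real.arsinh (t / ρ) := by
  have factor : √(ρ ^ 2 + t ^ 2) - t = ρ * Real.exp (-Real.arsinh (t / ρ)) := by
    rw [← Real.arsinh_neg, Real.exp_arsinh, sqrt_sq_add_sq_eq_mul hρ, neg_sq]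
    field_simp
    ring
  rw [factor, Real.log_mul hρ.ne' (Real.exp_ne_zero _), Real.log_exp, ← sub_eq_add_neg]

theorem tendsto_arsinh_sub_log_atTop :
    Tendsto (fun x : ℝ ↦ Real.arsinh x - Real.log x) atTop (𝓝 (Real.log 2)) := by
  have lim : Tendsto (fun x : ℝ ↦ 1 + √(1 + x⁻¹ ^ 2)) atTop (𝓝 2) := by
    have radicand : Tendsto (fun x : ℝ ↦ 1 + x⁻¹ ^ 2) atTop (𝓝 1) := by
      simpa using (tendsto_inv_atTop_zero.pow 2).const_add (1 : ℝ)
    simpa [one_add_one_eq_two] using radicand.sqrt.const_add 1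
  refine (lim.log two_ne_zero).congr' ?_
  filter_upwards [eventually_gt_atTop 0] with x hx
  have sqrt_eq : √(1 + x ^ 2) = x * √(1 + x⁻¹ ^ 2) := by
    simpa only [one_pow, one_div, add_comm (x ^ 2)] using sqrt_sq_add_sq_eq_mul hx 1
  rw [Real.arsinh, sqrt_eq, ← mul_one_add, Real.log_mul hx.ne' (by positivity), add_sub_cancel_left]

theorem tendsto_arsinh_add_sub_arsinh_atTop (c : ℝ) :
    Tendsto (fun x : ℝ ↦ Real.arsinh (x + c) - Real.arsinh x) atTop (𝓝 0) := by
  have shifted := tendsto_arsinh_sub_log_atTop.comp (tendsto_atTop_add_const_right _ c tendsto_id)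
  have lim := (shifted.sub tendsto_arsinh_sub_log_atTop).add (Real.tendsto_log_comp_add_sub_log c)
  rw [sub_self, add_zero] at lim
  refine lim.congr fun x ↦ ?_
  simp only [Function.comp_apply, id_eq]
  ring

theorem tendsto_arsinh_add_sub_arsinh_cobounded (c : ℝ) :
    Tendsto (fun x : ℝ ↦ Real.arsinh (x + c) - Real.arsinh x) (Bornology.cobounded ℝ) (𝓝 0) := by
  rw [Metric.cobounded_eq_cocompact, cocompact_eq_atBot_atTop, tendsto_sup]
  refine ⟨?_, tendsto_arsinh_add_sub_arsinh_atTop c⟩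
  have lim := ((tendsto_arsinh_add_sub_arsinh_atTop (-c)).comp tendsto_neg_atBot_atTop).neg
  rw [neg_zero] at lim
  refine lim.congr fun x ↦ ?_
  rw [Function.comp_apply, ← neg_add, Real.arsinh_neg, Real.arsinh_neg]
  ring

theorem intervalPotential_eq_arsinh_sub_arsinh (a b : ℝ) {ρ : ℝ} (hρ : 0 < ρ) (z : ℝ) :
    intervalPotential a b ρ z = Real.arsinh ((z - b) / ρ) - Real.arsinh ((z - a) / ρ) := by
  rw [intervalPotential, log_sqrt_sq_add_sq_sub hρ, log_sqrt_sq_add_sq_sub hρ,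
    sub_sub_sub_cancel_left]

theorem intervalPotential_add_add (a b t ρ z : ℝ) :
    intervalPotential (a + t) (b + t) ρ z = intervalPotential a b ρ (z - t) := by
  simp only [intervalPotential, sub_sub, add_comm t]

theorem tendsto_intervalPotential_cobounded (a b : ℝ) {ρ : ℝ} (hρ : 0 < ρ) :
    Tendsto (intervalPotential a b ρ) (Bornology.cobounded ℝ) (𝓝 0) := by
  have rescale : Tendsto (fun z ↦ (z - a) / ρ) (Bornology.cobounded ℝ) (Bornology.cobounded ℝ) := by
    simpa only [div_eq_mul_inv, Function.comp_def] using
      (tendsto_mul_right_cobounded (inv_ne_zero hρ.ne')).comp (tendsto_sub_const_cobounded a)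
  refine ((tendsto_arsinh_add_sub_arsinh_cobounded ((a - b) / ρ)).comp rescale).congr fun z ↦ ?_
  rw [Function.comp_apply, ← add_div, sub_add_sub_cancel,
    intervalPotential_eq_arsinh_sub_arsinh a b hρ]

theorem tendsto_sub_intCast_mul_cobounded (z : ℝ) {T : ℝ} (hT : T ≠ 0) :
    Tendsto (fun j : ℤ ↦ z - j * T) cofinite (Bornology.cobounded ℝ) := by
  have cast : Tendsto ((↑) : ℤ → ℝ) cofinite (Bornology.cobounded ℝ) := by
    rw [Metric.cobounded_eq_cocompact]
    exact Int.tendsto_coe_cofinite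
  exact (tendsto_const_sub_cobounded z).comp ((tendsto_mul_right_cobounded hT).comp cast)

theorem sum_Icc_shift_sub {G : Type*} [AddCommGroup G] (f : ℤ → G) (n : ℕ) :
    ∑ j ∈ Finset.Icc (-n : ℤ) n, (f (j - 1) - f j) = f (-n - 1) - f n := by
  have telescope := Finset.sum_Ico_int_sub n fun j ↦ f (j - 1)
  simp only [add_sub_cancel_right] at telescope
  rw [Finset.sum_Icc_eq_sum_Ico_add _ (by lia), telescope, sub_add_sub_cancel]

theorem tendsto_sum_Icc_shift_sub {G : Type*} [AddCommGroup G] [TopologicalSpace G]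
    [ContinuousSub G] {f : ℤ → G} (hf : Tendsto f cofinite (𝓝 0)) :
    Tendsto (fun n : ℕ ↦ ∑ j ∈ Finset.Icc (-n : ℤ) n, (f (j - 1) - f j)) atTop (𝓝 0) := by
  rw [Int.cofinite_eq, tendsto_sup] at hf
  have left : Tendsto (fun n : ℕ ↦ (-n - 1 : ℤ)) atTop atBot :=
    tendsto_atBot_add_const_right _ (-1)
      (tendsto_neg_atTop_atBot.comp tendsto_natCast_atTop_atTop)
  have lim := (hf.1.comp left).sub (hf.2.comp tendsto_natCast_atTop_atTop)
  rw [sub_zero] at lim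
  exact lim.congr fun n ↦ (sum_Icc_shift_sub f n).symm

theorem soliton_potential_periodic_general (a b T : ℝ) (c : ℕ → ℝ) (u : ℝ → ℝ → ℝ)
    (hu : ∀ ρ z : ℝ, 0 < ρ → Tendsto
      (fun n : ℕ ↦
        (∑ j ∈ Finset.Icc (-n : ℤ) n, intervalPotential (a + j * T) (b + j * T) ρ z) + c n)
      atTop (𝓝 (u ρ z))) :
    ∀ ρ z : ℝ, 0 < ρ → u ρ (z + T) = u ρ z := by
  intro ρ z hρ
  obtain rfl | hT := eq_or_ne T 0
  · rw [add_zero]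
  let f (j : ℤ) : ℝ := intervalPotential a b ρ (z - j * T)
  have f_tendsto : Tendsto f cofinite (𝓝 0) :=
    (tendsto_intervalPotential_cobounded a b hρ).comp (tendsto_sub_intCast_mul_cobounded z hT)
  have rod (j : ℤ) : intervalPotential (a + j * T) (b + j * T) ρ z = f j :=
    intervalPotential_add_add ..
  have rod_shift (j : ℤ) :
      intervalPotential (a + j * T) (b + j * T) ρ (z + T) = f (j - 1) := by
    have shift : z + T - j * T = z - (j - 1 : ℤ) * T := by
      push_cast
      ring
    rw [intervalPotential_add_add, shift]
  have lim := (hu ρ z hρ).add (tendsto_sum_Icc_shift_sub f_tendsto)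
  rw [add_zero] at lim
  refine tendsto_nhds_unique (hu ρ (z + T) hρ) (lim.congr fun n ↦ ?_)
  simp only [rod, rod_shift, Finset.sum_sub_distrib]
  ring

/-- The renormalized soliton potential `u` is `2L`-periodic in `z`. -/
theorem soliton_potential_periodic (L : ℝ) (hL : 0 < L)
    (u : ℝ → ℝ → ℝ)
    (hu : ∀ ρ z : ℝ, 0 < ρ → Tendsto
      (fun n : ℕ =>
        (∑ j ∈ Finset.Icc (-(n : ℤ)) (n : ℤ),
          intervalPotential (2 * (j : ℝ) * L) ((2 * (j : ℝ) + 1) * L) ρ z)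
          + Real.log n)
      atTop (𝓝 (u ρ z))) :
    ∀ ρ z : ℝ, 0 < ρ → u ρ (z + 2 * L) = u ρ z := by
  refine soliton_potential_periodic_general 0 L (2 * L) (fun n ↦ Real.log n) u fun ρ z hρ ↦ ?_
  convert! hu ρ z hρ using 5 <;> ring
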